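/- Let V be a finite nonempty type, E : Finset (V × V) a directed road network, and P a nonempty finite set of source–destination pairs (s, t) ∈ V × V with s ≠ t for each pair. Then for every Q' ⊆ E: f*(E \ Q', P) = 0 if and only if Q' is a directed multicut for P. (This is the correctness of the L-reduction from Minimum Multi-Cut used in the APX-hardness proof of the problem of Minimizing Targets.) -/

import Mathlib

open scoped ENNReal

/-- A directed walk of length `n` from `s` to `t` using only edges in `A`. -/
def IsDirWalk {V : Type*} (A : Finset (V × V)) (s t : V) (n : ℕ) : Prop :=
  ∃ f : ℕ → V, f 0 = s ∧ f n = t ∧ ∀ i < n, (f i, f (i + 1)) ∈ A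

/-- The directed distance `d_A(s,t)` in `ℝ≥0∞`: the infimum of lengths of
directed walks from `s` to `t` in `A` (`∞` if there is no such walk). -/
noncomputable def dDist {V : Type*} (A : Finset (V × V)) (s t : V) : ℝ≥0∞ :=
  sInf {x : ℝ≥0∞ | ∃ n : ℕ, IsDirWalk A s t n ∧ x = (n : ℝ≥0∞)}

/-- The traffic-quality objective `f*` under the simple traffic model `M∅`. -/
noncomputable def fStar {V : Type*} (A : Finset (V × V)) (R : Finset (V × V)) : ℝ≥0∞ :=
  (R.card : ℝ≥0∞)⁻¹ * ∑ p ∈ R, (dDist A p.1 p.2)⁻¹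

/-- The ride set `R_S`: all ordered pairs of distinct terminals of `S`. -/
def ridesOf {V : Type*} [DecidableEq V] (S : Finset V) : Finset (V × V) :=
  (S ×ˢ S).filter fun p => p.1 ≠ p.2

/-- `F` is a directed multiway cut for the terminal set `S` in the network `E`:
in `E \ F` there is no directed walk between any two distinct terminals. -/
def IsDirMultiwayCut {V : Type*} [DecidableEq V] (E F : Finset (V × V)) (S : Finset V) : Prop :=
  ∀ s ∈ S, ∀ s' ∈ S, s ≠ s' → ∀ n : ℕ, ¬ IsDirWalk (E \ F) s s' n

/-- `F` is a directed multicut for the set `P` of source–destination pairs in `E`: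
in `E \ F` there is no directed walk from `s` to `t` for any `(s,t) ∈ P`. -/
def IsDirMulticut {V : Type*} [DecidableEq V] (E F : Finset (V × V)) (P : Finset (V × V)) : Prop :=
  ∀ p ∈ P, ∀ n : ℕ, ¬ IsDirWalk (E \ F) p.1 p.2 n

theorem dDist_eq_top_iff {V : Type*} {A : Finset (V × V)} {s t : V} :
    dDist A s t = ⊤ ↔ ∀ n, ¬ IsDirWalk A s t n := by
  rw [dDist, sInf_eq_top]
  constructor
  · intro h n hwalk
    exact ENNReal.natCast_ne_top n (h n ⟨n, hwalk, rfl⟩)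
  · rintro hno _ ⟨n, hwalk, rfl⟩
    exact absurd hwalk (hno n)

theorem fStar_eq_zero_iff {V : Type*} {A R : Finset (V × V)} :
    fStar A R = 0 ↔ ∀ p ∈ R, dDist A p.1 p.2 = ⊤ := by
  -- For `R = ∅` the factor `(R.card)⁻¹` is `⊤`, and the left side holds since `⊤ * 0 = 0`.
  have card_inv_ne_zero : (R.card : ℝ≥0∞)⁻¹ ≠ 0 :=
    ENNReal.inv_ne_zero.mpr (ENNReal.natCast_ne_top R.card)
  simp only [fStar, mul_eq_zero, card_inv_ne_zero, false_or, Finset.sum_eq_zero_iff,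
    ENNReal.inv_eq_zero]

theorem stmt_5_general {V : Type*} [DecidableEq V]
    (E : Finset (V × V)) (P : Finset (V × V)) (hP : P.Nonempty) (Q' : Finset (V × V)) :
    fStar (E \ Q') P = 0 ↔ IsDirMulticut E Q' P := by
  simp only [fStar_eq_zero_iff, dDist_eq_top_iff, IsDirMulticut]

theorem stmt_5 {V : Type*} [Fintype V] [Nonempty V] [DecidableEq V]
    (E : Finset (V × V)) (P : Finset (V × V)) (hP : P.Nonempty)
    (hst : ∀ p ∈ P, p.1 ≠ p.2)
    (Q' : Finset (V × V)) (hQ : Q' ⊆ E) :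
    fStar (E \ Q') P = 0 ↔ IsDirMulticut E Q' P :=
  stmt_5_general E P hP Q'
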